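/- There exists ε₀ ∈ (0,1), depending only on the dimension d ≥ 1, such that the following holds. Let Λ ⊂ ℤ^d be a finite rectangle, v : Λ → [0,1], ε ∈ (0, ε₀], γ ∈ (0, ε^{20}], ε₁ = ε/3, E ∈ ℝ, and λ ∈ ℝ with |λ − E| ≤ ε₁/2. Let R = { x ∈ Λ : |v_x + 2dγ − E| ≤ ε₁ }, assume ∅ ≠ R ≠ Λ, and let C, D be the corresponding blocks of H with respect to the partition Λ = R ∪ (Λ∖R). Then D − λ·I is invertible and the eigenfunction-generating kernel satisfies, for all x ∈ Λ∖R and y ∈ R: | ( (D − λ)^{−1} C )_{x y} | ≤ γ^{0.9 · |x−y|}. -/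

import Mathlib

noncomputable section

open scoped BigOperators

/-- ℓ¹ distance on `ℤ^d` (natural-number valued). -/
def dist1 {d : ℕ} (x y : Fin d → ℤ) : ℕ := ∑ i, (x i - y i).natAbs

lemma dist1_comm {d : ℕ} (x y : Fin d → ℤ) : dist1 x y = dist1 y x :=
  Finset.sum_congr rfl fun i _ => by rw [← Int.natAbs_neg, neg_sub]

/-- ℓ¹ diameter of a finite subset of `ℤ^d`. -/
def diam1 {d : ℕ} (Λ : Finset (Fin d → ℤ)) : ℕ := (Λ ×ˢ Λ).sup fun p => dist1 p.1 p.2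

/-- `Λ` is a (possibly empty) rectangle: a product of integer intervals. -/
def IsRect {d : ℕ} (Λ : Finset (Fin d → ℤ)) : Prop := ∃ a b : Fin d → ℤ, Λ = Finset.Icc a b

/-- Entry of the Anderson Hamiltonian `H = H₀ - γ J` with potential `v`. -/
def hamEntry (d : ℕ) (γ : ℝ) (v : (Fin d → ℤ) → ℝ) (x y : Fin d → ℤ) : ℝ :=
  (if x = y then 2*d*γ + v x else 0) - γ * (if dist1 x y = 1 then 1 else 0)

/-- The Anderson Hamiltonian restricted to a finite set `X ⊂ ℤ^d`. -/
def hamOn (d : ℕ) (γ : ℝ) (v : (Fin d → ℤ) → ℝ) (X : Finset (Fin d → ℤ)) :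
    Matrix X X ℝ := Matrix.of fun x y => hamEntry d γ v x y

lemma hamOn_isHermitian (d : ℕ) (γ : ℝ) (v : (Fin d → ℤ) → ℝ) (X : Finset (Fin d → ℤ)) :
    (hamOn d γ v X).IsHermitian := by
  ext x y
  simp only [Matrix.conjTranspose_apply, hamOn, Matrix.of_apply, hamEntry, star_trivial]
  rw [dist1_comm]
  by_cases h : (y : Fin d → ℤ) = (x : Fin d → ℤ)
  · rw [if_pos h, if_pos h.symm, h]
  · rw [if_neg h, if_neg (show ¬((x : Fin d → ℤ) = (y : Fin d → ℤ)) from fun hh => h hh.symm)]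

open scoped Classical in
/-- Number of eigenvalues (with multiplicity) of a Hermitian matrix in `[a,b]`. -/
def countEigIn {n : Type*} [Fintype n] [DecidableEq n] {M : Matrix n n ℝ}
    (hM : M.IsHermitian) (a b : ℝ) : ℕ :=
  (Finset.univ.filter fun i => hM.eigenvalues i ∈ Set.Icc a b).card

/-- Expectation with respect to the uniform measure on a finite configuration space. -/
def expect {Ω : Type*} [Fintype Ω] (f : Ω → ℝ) : ℝ := (∑ ω, f ω) / Fintype.card Ω

open scoped Classical in
/-- Probability of an event with respect to the uniform measure on a finite space. -/
def prob {Ω : Type*} [Fintype Ω] (A : Ω → Prop) : ℝ :=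
  ((Finset.univ.filter A).card : ℝ) / Fintype.card Ω

/-- The random potential determined by a configuration `ω : Λ → Fin N`:
the value at `x ∈ Λ` is `ω x / (N-1) ∈ {0, 1/(N-1), …, 1}`. -/
def potential {d : ℕ} (N : ℕ) (Λ : Finset (Fin d → ℤ)) (ω : Λ → Fin N) :
    (Fin d → ℤ) → ℝ := fun x => if h : x ∈ Λ then (ω ⟨x, h⟩ : ℕ) / ((N : ℝ) - 1) else 0


/-- The off-diagonal block of the Hamiltonian between two index sets. -/
def hamBlock (d : ℕ) (γ : ℝ) (v : (Fin d → ℤ) → ℝ)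
    (X Y : Finset (Fin d → ℤ)) : Matrix X Y ℝ :=
  Matrix.of fun x y => hamEntry d γ v x y

/-!
Dividing a column `u` of `(D - λ)⁻¹ C` by the weight `g x = θ ^ dist1 x y` and reading the equation
`(D - λ) u = C_y` at a site maximizing `|u| / g` gives a maximum principle: `|u| < g` as soon as, in
every row, the diagonal entry times `g` beats the source term plus the off-diagonal entries times
`g`. Since `g y = 1`, the source term has the same form as the off-diagonal ones, so the total is a
sum of `|γ| * g` over nearest neighbours. There are at most `2d` of them and `g` grows by at most
`θ⁻¹` across an edge, hence `2d|γ| < δθ` suffices, where `δ` is a lower bound for the distance from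
`λ` to the diagonal of `D`. Take `θ = γ ^ 0.9` and `δ = ε / 6`.
-/

section MaximumPrinciple

variable {K m n : Type*} [NormedField K] [Fintype n] [DecidableEq n] {A : Matrix n n K} {g : n → ℝ}

lemma norm_diag_mul_norm_le (A : Matrix n n K) (u : n → K) (i : n) :
    ‖A i i‖ * ‖u i‖ ≤ ‖A.mulVec u i‖ + ∑ j ∈ Finset.univ.erase i, ‖A i j‖ * ‖u j‖ := by
  have split : A i i * u i = A.mulVec u i - ∑ j ∈ Finset.univ.erase i, A i j * u j :=
    eq_sub_of_add_eq (Finset.add_sum_erase _ (fun j => A i j * u j) (Finset.mem_univ i))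
  calc ‖A i i‖ * ‖u i‖ = ‖A.mulVec u i - ∑ j ∈ Finset.univ.erase i, A i j * u j‖ := by
        rw [← norm_mul, split]
    _ ≤ ‖A.mulVec u i‖ + ∑ j ∈ Finset.univ.erase i, ‖A i j * u j‖ :=
        (norm_sub_le _ _).trans (by gcongr; exact norm_sum_le _ _)
    _ = _ := by simp only [norm_mul]

theorem norm_lt_of_weighted_sum_row_lt_diag {u : n → K} (hg : ∀ i, 0 < g i)
    (h : ∀ i, ‖A.mulVec u i‖ + ∑ j ∈ Finset.univ.erase i, ‖A i j‖ * g j < ‖A i i‖ * g i) (i : n) :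
    ‖u i‖ < g i := by
  obtain ⟨k, -, hk⟩ :=
    Finset.exists_max_image Finset.univ (fun j => ‖u j‖ / g j) ⟨i, Finset.mem_univ i⟩
  set M := ‖u k‖ / g k
  have u_le (j : n) : ‖u j‖ ≤ M * g j := (div_le_iff₀ (hg j)).1 (hk j (Finset.mem_univ j))
  have u_max : ‖u k‖ = M * g k := (div_mul_cancel₀ _ (hg k).ne').symm
  suffices M_lt : M < 1 from (u_le i).trans_lt (mul_lt_of_lt_one_left (hg i) M_lt)
  by_contra! one_le_M
  refine lt_irrefl (‖A k k‖ * ‖u k‖) ?_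
  calc ‖A k k‖ * ‖u k‖
      ≤ ‖A.mulVec u k‖ + ∑ j ∈ Finset.univ.erase k, ‖A k j‖ * ‖u j‖ := norm_diag_mul_norm_le A u k
    _ ≤ M * ‖A.mulVec u k‖ + ∑ j ∈ Finset.univ.erase k, ‖A k j‖ * (M * g j) := by
        gcongr with j
        · exact le_mul_of_one_le_left (norm_nonneg _) one_le_M
        · exact u_le j
    _ = M * (‖A.mulVec u k‖ + ∑ j ∈ Finset.univ.erase k, ‖A k j‖ * g j) := by
        simp only [mul_add, Finset.mul_sum, mul_left_comm M]
    _ < M * (‖A k k‖ * g k) := mul_lt_mul_of_pos_left (h k) (one_pos.trans_le one_le_M)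
    _ = ‖A k k‖ * ‖u k‖ := by rw [u_max, mul_left_comm]

theorem norm_inv_mul_apply_lt_of_weighted_sum_row_lt_diag {B : Matrix n m K} {k : m}
    (hA : IsUnit A) (hg : ∀ i, 0 < g i)
    (h : ∀ i, ‖B i k‖ + ∑ j ∈ Finset.univ.erase i, ‖A i j‖ * g j < ‖A i i‖ * g i) (i : n) :
    ‖(A⁻¹ * B) i k‖ < g i := by
  have solves (j : n) : A.mulVec (fun l => (A⁻¹ * B) l k) j = B j k :=
    congrFun₂ (A.mul_nonsing_inv_cancel_left B ((Matrix.isUnit_iff_isUnit_det A).1 hA)) j k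
  exact norm_lt_of_weighted_sum_row_lt_diag hg (fun j => by rw [solves]; exact h j) i

end MaximumPrinciple

section Lattice

variable {d : ℕ}

lemma dist1_self (x : Fin d → ℤ) : dist1 x x = 0 := by simp [dist1]

lemma dist1_triangle (x y z : Fin d → ℤ) : dist1 x z ≤ dist1 x y + dist1 y z := by
  unfold dist1
  rw [← Finset.sum_add_distrib]
  exact Finset.sum_le_sum fun i _ => by omega

lemma exists_eq_add_single_of_dist1_eq_one {x y : Fin d → ℤ} (h : dist1 x y = 1) :
    ∃ (i : Fin d) (s : ℤˣ), y = x + Pi.single i (s : ℤ) := by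
  obtain ⟨i, -, hi⟩ : ∃ i ∈ Finset.univ, (x i - y i).natAbs ≠ 0 :=
    Finset.exists_ne_zero_of_sum_ne_zero (h.trans_ne one_ne_zero)
  have total : (x i - y i).natAbs + ∑ j ∈ Finset.univ.erase i, (x j - y j).natAbs = 1 :=
    (Finset.add_sum_erase _ _ (Finset.mem_univ i)).trans h
  have rest : ∑ j ∈ Finset.univ.erase i, (x j - y j).natAbs = 0 := by omega
  obtain ⟨s, hs⟩ : IsUnit (y i - x i) := Int.isUnit_iff_natAbs_eq.2 (by omega)
  refine ⟨i, s, funext fun j => ?_⟩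
  obtain rfl | hj := eq_or_ne j i
  · simp [hs]
  · have := Finset.sum_eq_zero_iff.1 rest j (Finset.mem_erase.2 ⟨hj, Finset.mem_univ j⟩)
    simp only [Pi.add_apply, Pi.single_eq_of_ne hj]
    omega

lemma card_filter_dist1_eq_one_le (S : Finset (Fin d → ℤ)) (x : Fin d → ℤ) :
    (S.filter fun z => dist1 x z = 1).card ≤ 2 * d := by
  let step (p : Fin d × ℤˣ) : Fin d → ℤ := x + Pi.single p.1 (p.2 : ℤ)
  have covered : (S.filter fun z => dist1 x z = 1) ⊆ Finset.univ.image step := fun z hz => by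
    obtain ⟨i, s, rfl⟩ := exists_eq_add_single_of_dist1_eq_one (Finset.mem_filter.1 hz).2
    exact Finset.mem_image_of_mem step (Finset.mem_univ (i, s))
  calc (S.filter fun z => dist1 x z = 1).card ≤ (Finset.univ.image step).card :=
        Finset.card_le_card covered
    _ ≤ Fintype.card (Fin d × ℤˣ) := Finset.card_image_le
    _ = 2 * d := by rw [Fintype.card_prod, Fintype.card_fin, Fintype.card_units_int, mul_comm]

lemma mul_sum_neighbors_pow_dist1_le {θ : ℝ} (hθ₀ : 0 ≤ θ) (hθ₁ : θ ≤ 1)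
    (S : Finset (Fin d → ℤ)) (x y : Fin d → ℤ) :
    θ * ∑ z ∈ S with dist1 x z = 1, θ ^ dist1 z y ≤ 2 * d * θ ^ dist1 x y := by
  have across_edge : ∀ z ∈ S.filter (fun z => dist1 x z = 1),
      θ * θ ^ dist1 z y ≤ θ ^ dist1 x y := fun z hz => by
    rw [← pow_succ']
    refine pow_le_pow_of_le_one hθ₀ hθ₁ ((dist1_triangle x z y).trans ?_)
    rw [(Finset.mem_filter.1 hz).2, add_comm]
  calc θ * ∑ z ∈ S with dist1 x z = 1, θ ^ dist1 z y
      ≤ (S.filter fun z => dist1 x z = 1).card • θ ^ dist1 x y := by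
        rw [Finset.mul_sum]
        exact Finset.sum_le_card_nsmul _ _ _ across_edge
    _ ≤ 2 * d * θ ^ dist1 x y := by
        rw [nsmul_eq_mul]
        gcongr
        exact_mod_cast card_filter_dist1_eq_one_le S x

end Lattice

section Hamiltonian

variable {d : ℕ} {γ lam : ℝ} {v : (Fin d → ℤ) → ℝ} {X Y : Finset (Fin d → ℤ)}

lemma abs_hamEntry_of_ne {x y : Fin d → ℤ} (h : x ≠ y) :
    |hamEntry d γ v x y| = if dist1 x y = 1 then |γ| else 0 := by
  unfold hamEntry
  rw [if_neg h]
  split_ifs <;> simp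

lemma hamOn_sub_smul_one_apply_self (x : X) :
    (hamOn d γ v X - lam • (1 : Matrix X X ℝ)) x x = v x + 2 * d * γ - lam := by
  simp only [hamOn, hamEntry, Matrix.sub_apply, Matrix.of_apply, Matrix.smul_apply,
    Matrix.one_apply_eq, dist1_self, smul_eq_mul, if_true, zero_ne_one, if_false]
  ring

lemma hamOn_sub_smul_one_apply_of_ne {x z : X} (h : x ≠ z) :
    (hamOn d γ v X - lam • (1 : Matrix X X ℝ)) x z = hamEntry d γ v x z := by
  simp [hamOn, h]

lemma sum_erase_norm_hamOn_sub_smul_one_mul (x : X) (f : (Fin d → ℤ) → ℝ) :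
    ∑ z ∈ Finset.univ.erase x, ‖(hamOn d γ v X - lam • (1 : Matrix X X ℝ)) x z‖ * f z =
      |γ| * ∑ z ∈ X with dist1 (x : Fin d → ℤ) z = 1, f z := by
  calc ∑ z ∈ Finset.univ.erase x, ‖(hamOn d γ v X - lam • (1 : Matrix X X ℝ)) x z‖ * f z
      = ∑ z ∈ Finset.univ.erase x, if dist1 (x : Fin d → ℤ) z = 1 then |γ| * f z else 0 := by
        refine Finset.sum_congr rfl fun z hz => ?_
        have hxz : x ≠ z := (Finset.ne_of_mem_erase hz).symm
        rw [hamOn_sub_smul_one_apply_of_ne hxz, Real.norm_eq_abs,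
          abs_hamEntry_of_ne (Subtype.coe_injective.ne hxz), ite_mul, zero_mul]
    _ = ∑ z : X, if dist1 (x : Fin d → ℤ) z = 1 then |γ| * f z else 0 :=
        Finset.sum_erase _ (by simp [dist1_self])
    _ = |γ| * ∑ z ∈ X with dist1 (x : Fin d → ℤ) z = 1, f z := by
        rw [Finset.sum_coe_sort X fun z => if dist1 (x : Fin d → ℤ) z = 1 then |γ| * f z else 0,
          ← Finset.sum_filter, Finset.mul_sum]

theorem isUnit_hamOn_sub_smul_one (hgap : ∀ x ∈ X, 2 * d * |γ| < |v x + 2 * d * γ - lam|) :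
    IsUnit (hamOn d γ v X - lam • (1 : Matrix X X ℝ)) := by
  rw [Matrix.isUnit_iff_isUnit_det, isUnit_iff_ne_zero]
  refine det_ne_zero_of_sum_row_lt_diag fun x => ?_
  rw [hamOn_sub_smul_one_apply_self, Real.norm_eq_abs]
  refine lt_of_le_of_lt ?_ (hgap x x.2)
  have row_sum := sum_erase_norm_hamOn_sub_smul_one_mul (γ := γ) (lam := lam) (v := v) x fun _ => 1
  simp only [mul_one, Finset.sum_const, nsmul_eq_mul] at row_sum
  rw [row_sum, mul_comm]
  gcongr
  exact_mod_cast card_filter_dist1_eq_one_le X x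

lemma abs_hamEntry_add_sum_neighbors_pow_dist1_eq {x y : Fin d → ℤ} (hx : x ∈ X) (hy : y ∉ X)
    (θ : ℝ) :
    |hamEntry d γ v x y| + |γ| * ∑ z ∈ X with dist1 x z = 1, θ ^ dist1 z y =
      |γ| * ∑ z ∈ insert y X with dist1 x z = 1, θ ^ dist1 z y := by
  rw [abs_hamEntry_of_ne (ne_of_mem_of_not_mem hx hy), Finset.sum_filter, Finset.sum_filter,
    Finset.sum_insert hy, mul_add, dist1_self, pow_zero, mul_ite, mul_one, mul_zero]

theorem abs_inv_hamOn_sub_smul_one_mul_hamBlock_apply_lt {θ : ℝ} (hθ₀ : 0 < θ) (hθ₁ : θ ≤ 1)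
    (hgap : ∀ x ∈ X, 2 * d * |γ| < |v x + 2 * d * γ - lam| * θ) (hXY : Disjoint X Y)
    (x : X) (y : Y) :
    |((hamOn d γ v X - lam • (1 : Matrix X X ℝ))⁻¹ * hamBlock d γ v X Y) x y| <
      θ ^ dist1 (x : Fin d → ℤ) y := by
  have hunit : IsUnit (hamOn d γ v X - lam • (1 : Matrix X X ℝ)) :=
    isUnit_hamOn_sub_smul_one fun x hx =>
      (hgap x hx).trans_le (mul_le_of_le_one_right (abs_nonneg _) hθ₁)
  refine norm_inv_mul_apply_lt_of_weighted_sum_row_lt_diag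
    (g := fun x : X => θ ^ dist1 (x : Fin d → ℤ) y) hunit (fun _ => pow_pos hθ₀ _) (fun x => ?_) x
  rw [hamOn_sub_smul_one_apply_self,
    sum_erase_norm_hamOn_sub_smul_one_mul x fun z => θ ^ dist1 z (y : Fin d → ℤ)]
  simp only [hamBlock, Matrix.of_apply, Real.norm_eq_abs]
  rw [abs_hamEntry_add_sum_neighbors_pow_dist1_eq x.2 (Finset.disjoint_right.1 hXY y.2)]
  refine lt_of_mul_lt_mul_left ?_ hθ₀.le
  calc θ * (|γ| * ∑ z ∈ insert (y : Fin d → ℤ) X with dist1 (x : Fin d → ℤ) z = 1, θ ^ dist1 z y)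
      ≤ |γ| * (2 * d * θ ^ dist1 (x : Fin d → ℤ) y) := by
        rw [mul_left_comm]
        exact mul_le_mul_of_nonneg_left (mul_sum_neighbors_pow_dist1_le hθ₀.le hθ₁ _ _ _)
          (abs_nonneg γ)
    _ = 2 * d * |γ| * θ ^ dist1 (x : Fin d → ℤ) y := by ring
    _ < |v x + 2 * d * γ - lam| * θ * θ ^ dist1 (x : Fin d → ℤ) y :=
        mul_lt_mul_of_pos_right (hgap x x.2) (pow_pos hθ₀ _)
    _ = θ * (|v x + 2 * d * γ - lam| * θ ^ dist1 (x : Fin d → ℤ) y) := by ring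

end Hamiltonian

lemma le_rpow_one_sub_mul_rpow_of_le {a b α : ℝ} (ha : 0 < a) (hab : a ≤ b) (hα : α ≤ 1) :
    a ≤ b ^ (1 - α) * a ^ α := by
  calc a = a ^ (1 - α) * a ^ α := by rw [← Real.rpow_add ha, sub_add_cancel, Real.rpow_one]
    _ ≤ b ^ (1 - α) * a ^ α := by
        gcongr

lemma two_mul_mul_lt_div_six_mul_rpow {ε γ : ℝ} {d : ℕ} (hε : 0 < ε) (hεd : 12 * d * ε < 1)
    (hγ : 0 < γ) (hγε : γ ≤ ε ^ 20) :
    2 * d * γ < ε / 6 * γ ^ (0.9 : ℝ) := by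
  have exponent : (ε ^ 20) ^ (1 - 0.9 : ℝ) = ε ^ 2 := by
    rw [← Real.rpow_natCast, ← Real.rpow_natCast, ← Real.rpow_mul hε.le]
    norm_num
  have γ_le : γ ≤ ε ^ 2 * γ ^ (0.9 : ℝ) :=
    exponent ▸ le_rpow_one_sub_mul_rpow_of_le hγ hγε (by norm_num)
  calc 2 * d * γ ≤ 2 * d * (ε ^ 2 * γ ^ (0.9 : ℝ)) := by gcongr
    _ = 12 * d * ε * (ε / 6 * γ ^ (0.9 : ℝ)) := by ring
    _ < ε / 6 * γ ^ (0.9 : ℝ) := mul_lt_of_lt_one_left (by positivity) hεd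

theorem first_step_eigenfunction_kernel_bound_general {d : ℕ} {Λ R : Finset (Fin d → ℤ)}
    {v : (Fin d → ℤ) → ℝ} {ε γ E lam : ℝ} (hε : 0 < ε) (hε₁ : ε ≤ 1) (hεd : 12 * d * ε < 1)
    (hγ : 0 < γ) (hγε : γ ≤ ε ^ 20) (hlam : |lam - E| ≤ ε / 3 / 2)
    (hR : ∀ x ∈ Λ, |v x + 2 * d * γ - E| ≤ ε / 3 → x ∈ R) :
    IsUnit (hamOn d γ v (Λ \ R) - lam • (1 : Matrix ↥(Λ \ R) ↥(Λ \ R) ℝ)) ∧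
    ∀ (x : ↥(Λ \ R)) (y : ↥R),
      |((hamOn d γ v (Λ \ R) - lam • (1 : Matrix ↥(Λ \ R) ↥(Λ \ R) ℝ))⁻¹ *
          hamBlock d γ v (Λ \ R) R) x y| ≤
        γ ^ ((0.9 : ℝ) * (dist1 (x : Fin d → ℤ) (y : Fin d → ℤ) : ℝ)) := by
  set θ := γ ^ (0.9 : ℝ)
  have θ_pos : 0 < θ := Real.rpow_pos_of_pos hγ _
  have θ_le : θ ≤ 1 :=
    Real.rpow_le_one hγ.le (hγε.trans (pow_le_one₀ hε.le hε₁)) (by norm_num)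
  have off_resonance : ∀ x ∈ Λ \ R, ε / 6 ≤ |v x + 2 * d * γ - lam| := fun x hx => by
    obtain ⟨hxΛ, hxR⟩ := Finset.mem_sdiff.1 hx
    have far : ε / 3 < |v x + 2 * d * γ - E| := not_le.1 fun near => hxR (hR x hxΛ near)
    linarith [abs_sub_le (v x + 2 * d * γ) lam E]
  have gap : ∀ x ∈ Λ \ R, 2 * d * |γ| < |v x + 2 * d * γ - lam| * θ := fun x hx => by
    rw [abs_of_pos hγ]
    exact (two_mul_mul_lt_div_six_mul_rpow hε hεd hγ hγε).trans_le
      (mul_le_mul_of_nonneg_right (off_resonance x hx) θ_pos.le)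
  refine ⟨isUnit_hamOn_sub_smul_one fun x hx =>
    (gap x hx).trans_le (mul_le_of_le_one_right (abs_nonneg _) θ_le), fun x y => ?_⟩
  rw [Real.rpow_mul_natCast hγ.le]
  exact (abs_inv_hamOn_sub_smul_one_mul_hamBlock_apply_lt θ_pos θ_le gap
    Finset.sdiff_disjoint x y).le

/-- **First-step bound on the eigenfunction-generating kernel** (Theorem 2.4 for
`k = 1`): under the same hypotheses as the first-step random-walk bound, `D - λ` is
invertible and `|((D-λ)⁻¹ C)_{xy}| ≤ γ^{0.9 |x-y|}` for `x ∈ Λ∖R`, `y ∈ R`. -/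
theorem first_step_eigenfunction_kernel_bound (d : ℕ) (hd : 1 ≤ d) :
    ∃ ε₀ : ℝ, 0 < ε₀ ∧ ε₀ < 1 ∧
    ∀ Λ : Finset (Fin d → ℤ), IsRect Λ →
    ∀ v : (Fin d → ℤ) → ℝ, (∀ x ∈ Λ, v x ∈ Set.Icc (0:ℝ) 1) →
    ∀ ε γ : ℝ, 0 < ε → ε ≤ ε₀ → 0 < γ → γ ≤ ε ^ (20 : ℕ) →
    ∀ E lam : ℝ, |lam - E| ≤ (ε/3)/2 →
    ∀ R : Finset (Fin d → ℤ),
      (∀ x, x ∈ R ↔ x ∈ Λ ∧ |v x + 2*d*γ - E| ≤ ε/3) →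
      R.Nonempty → R ≠ Λ →
    IsUnit (hamOn d γ v (Λ \ R) - lam • (1 : Matrix ↥(Λ \ R) ↥(Λ \ R) ℝ)) ∧
    ∀ (x : ↥(Λ \ R)) (y : ↥R),
      |((hamOn d γ v (Λ \ R) - lam • (1 : Matrix ↥(Λ \ R) ↥(Λ \ R) ℝ))⁻¹ *
          hamBlock d γ v (Λ \ R) R) x y|
        ≤ γ ^ ((0.9 : ℝ) * ((dist1 (x : Fin d → ℤ) (y : Fin d → ℤ) : ℕ) : ℝ)) := by
  have one_le_d : (1 : ℝ) ≤ d := by exact_mod_cast hd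
  refine ⟨1 / (12 * d + 1), by positivity, (div_lt_one (by positivity)).2 (by linarith),
    fun Λ _ v _ ε γ hε hε₀ hγ hγε E lam hlam R hR _ _ => ?_⟩
  have hεd : ε * (12 * d + 1) ≤ 1 := (le_div_iff₀ (by positivity)).1 hε₀
  exact first_step_eigenfunction_kernel_bound_general hε (by nlinarith) (by linarith) hγ hγε hlam
    fun x hx near => (hR x).2 ⟨hx, near⟩
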